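/- The sum over n from 1 to infinity of ((H_{n-1}² − H_{n-1}^{(2)})/(n·4^n))·C(2n,n) equals 4ζ(3) + (8/3)(ln 2)³ + (2π²/3)·ln 2. -/

import Mathlib

open Finset Real

noncomputable def H (n : ℕ) : ℝ := ∑ i ∈ Finset.range n, 1/((i:ℝ)+1)

noncomputable def H2 (n : ℕ) : ℝ := ∑ i ∈ Finset.range n, 1/((i:ℝ)+1)^2

noncomputable def H3 (n : ℕ) : ℝ := ∑ i ∈ Finset.range n, 1/((i:ℝ)+1)^3

noncomputable def hh (r n : ℕ) : ℝ := (Nat.choose (n+r-1) (r-1)) * (H (n+r-1) - H (r-1))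

noncomputable def zeta3 : ℝ := ∑' n : ℕ, 1/((n:ℝ)+1)^3

open Filter Topology

/-- The ratio of rising factorials `(1/2)_m / (N+1)_m`. -/
noncomputable def halfRatio (N m : ℕ) : ℝ :=
  ∏ k ∈ Finset.range m, ((k : ℝ) + 1/2) / ((N : ℝ) + 1 + k)

/-- The coefficient of `a^j` in `(a)_m / m!`, where `(a)_m` is the rising factorial. -/
noncomputable def risingCoeff : ℕ → ℕ → ℝ
  | 0, 0 => 1
  | _ + 1, 0 => 0
  | 0, _ + 1 => 0
  | j + 1, m + 1 => (m * risingCoeff (j + 1) m + risingCoeff j m) / (m + 1)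

/-- The rising factorial quotient `(1/4)_m / m!`. -/
noncomputable def quarterRatio (m : ℕ) : ℝ :=
  ∏ k ∈ Finset.range m, ((k : ℝ) + 1/4) / ((k : ℝ) + 1)

/-- The coefficient of `a^j` in the hypergeometric value `₂F₁(1/2, a; N+1; 1)`. -/
noncomputable def gaussCoeff (j N : ℕ) : ℝ := ∑' m : ℕ, halfRatio N m * risingCoeff j m

/-- Partial sums of `∑ (1/(k+1/2)^j - 1/(k+1)^j)`. -/
noncomputable def powerGap (j N : ℕ) : ℝ :=
  ∑ k ∈ Finset.range N, (1 / ((k : ℝ) + 1/2)^j - 1 / ((k : ℝ) + 1)^j)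

lemma halfRatio_succ (N m : ℕ) :
    halfRatio N (m + 1) = halfRatio N m * (((m : ℝ) + 1/2) / ((N : ℝ) + 1 + m)) :=
  Finset.prod_range_succ _ _

lemma halfRatio_pos (N m : ℕ) : 0 < halfRatio N m :=
  Finset.prod_pos fun k _ => by positivity

lemma halfRatio_param_succ (N m : ℕ) :
    halfRatio (N + 1) m = halfRatio N m * (((N : ℝ) + 1) / ((N : ℝ) + 1 + m)) := by
  induction m with
  | zero =>
    have : (N : ℝ) + 1 ≠ 0 := by positivity
    simp [halfRatio, this]
  | succ m ih =>
    rw [halfRatio_succ, halfRatio_succ, ih]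
    push_cast
    have h1 : (N : ℝ) + 1 + m ≠ 0 := by positivity
    have h2 : (N : ℝ) + 1 + 1 + m ≠ 0 := by positivity
    have h3 : (N : ℝ) + 1 + (m + 1) ≠ 0 := by positivity
    field_simp
    ring

lemma halfRatio_le (N m : ℕ) : halfRatio N m ≤ halfRatio 0 m := by
  induction N with
  | zero => exact le_rfl
  | succ N ih =>
    refine le_trans ?_ ih
    rw [halfRatio_param_succ]
    refine mul_le_of_le_one_right (halfRatio_pos N m).le ?_
    rw [div_le_one (by positivity)]
    linarith [(Nat.cast_nonneg m : (0 : ℝ) ≤ m)]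

lemma halfRatio_le_div (N m : ℕ) (hm : m ≠ 0) : halfRatio N m ≤ halfRatio 0 m / ((N : ℝ) + 1) := by
  induction N with
  | zero => simp
  | succ N ih =>
    have hm' : (1 : ℝ) ≤ m := by exact_mod_cast Nat.one_le_iff_ne_zero.mpr hm
    have h1 := mul_le_mul_of_nonneg_right ih
      (show 0 ≤ ((N : ℝ) + 1) / ((N : ℝ) + 1 + m) by positivity)
    rw [halfRatio_param_succ]
    refine h1.trans ?_
    push_cast
    rw [show halfRatio 0 m / ((N : ℝ) + 1) * (((N : ℝ) + 1) / ((N : ℝ) + 1 + m))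
      = halfRatio 0 m / ((N : ℝ) + 1 + m) by field_simp]
    exact div_le_div_of_nonneg_left (halfRatio_pos 0 m).le (by positivity) (by linarith)

lemma halfRatio_zero_eq (m : ℕ) : halfRatio 0 m = (Nat.choose (2 * m) m : ℝ) / 4 ^ m := by
  induction m with
  | zero => simp [halfRatio]
  | succ m ih =>
    have h : ((m : ℝ) + 1) * (Nat.choose (2 * (m + 1)) (m + 1) : ℝ)
        = 2 * (2 * m + 1) * (Nat.choose (2 * m) m : ℝ) := by
      exact_mod_cast Nat.succ_mul_centralBinom_succ m
    rw [halfRatio_succ, ih, pow_succ]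
    have h1 : (m : ℝ) + 1 ≠ 0 := by positivity
    push_cast
    rw [zero_add, add_comm (1 : ℝ)]
    field_simp
    linear_combination -2 * h

lemma risingCoeff_succ (j m : ℕ) :
    risingCoeff (j + 1) (m + 1) = (m * risingCoeff (j + 1) m + risingCoeff j m) / (m + 1) := by
  rw [risingCoeff]

lemma risingCoeff_nonneg (j m : ℕ) : 0 ≤ risingCoeff j m := by
  induction m generalizing j with
  | zero => cases j <;> simp [risingCoeff]
  | succ m ih =>
    cases j with
    | zero => simp [risingCoeff]
    | succ j =>
      rw [risingCoeff_succ]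
      have := ih j
      have := ih (j + 1)
      positivity

lemma quarterRatio_succ (m : ℕ) :
    quarterRatio (m + 1) = quarterRatio m * (((m : ℝ) + 1/4) / ((m : ℝ) + 1)) :=
  Finset.prod_range_succ _ _

lemma quarterRatio_pos (m : ℕ) : 0 < quarterRatio m :=
  Finset.prod_pos fun k _ => by positivity

lemma risingCoeff_le (j m : ℕ) : risingCoeff j m ≤ 4 ^ j * quarterRatio m := by
  induction m generalizing j with
  | zero =>
    cases j with
    | zero => simp [risingCoeff, quarterRatio]
    | succ j => simp [risingCoeff, quarterRatio]
  | succ m ih =>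
    cases j with
    | zero => simpa [risingCoeff] using (quarterRatio_pos (m + 1)).le
    | succ j =>
      rw [risingCoeff_succ, quarterRatio_succ, div_le_iff₀ (by positivity)]
      have h1 := ih j
      have h2 := mul_le_mul_of_nonneg_left (ih (j + 1)) (Nat.cast_nonneg m : (0 : ℝ) ≤ m)
      have h3 : (4 : ℝ) ^ (j + 1) * (quarterRatio m * (((m : ℝ) + 1/4) / ((m : ℝ) + 1)))
          * ((m : ℝ) + 1) = m * (4 ^ (j + 1) * quarterRatio m) + 4 ^ j * quarterRatio m := by
        field_simp
        ring
      rw [h3]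
      exact add_le_add h2 h1

lemma majorant_sub_succ (m : ℕ) :
    (m : ℝ) * (halfRatio 0 m * quarterRatio m)
      - ((m + 1 : ℕ) : ℝ) * (halfRatio 0 (m + 1) * quarterRatio (m + 1))
      = halfRatio 0 m * quarterRatio m * (((m : ℝ) / 4 - 1/8) / ((m : ℝ) + 1)) := by
  rw [halfRatio_succ, quarterRatio_succ]
  push_cast
  rw [zero_add, add_comm (1 : ℝ)]
  field_simp
  ring

lemma majorant_succ_le (m : ℕ) :
    halfRatio 0 (m + 1) * quarterRatio (m + 1) / 16 ≤
      ((m + 1 : ℕ) : ℝ) * (halfRatio 0 (m + 1) * quarterRatio (m + 1))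
      - ((m + 2 : ℕ) : ℝ) * (halfRatio 0 (m + 2) * quarterRatio (m + 2)) := by
  rw [majorant_sub_succ (m + 1), div_eq_mul_one_div]
  have hpos := mul_pos (halfRatio_pos 0 (m + 1)) (quarterRatio_pos (m + 1))
  refine mul_le_mul_of_nonneg_left ?_ hpos.le
  rw [le_div_iff₀ (by positivity)]
  push_cast
  linarith [(Nat.cast_nonneg m : (0 : ℝ) ≤ m)]

lemma summable_majorant : Summable fun m : ℕ => halfRatio 0 m * quarterRatio m := by
  rw [← summable_nat_add_iff 1]
  refine summable_of_sum_range_le (c := 16 * (halfRatio 0 1 * quarterRatio 1)) (fun m => ?_)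
    (fun n => ?_)
  · exact (mul_pos (halfRatio_pos 0 (m + 1)) (quarterRatio_pos (m + 1))).le
  · have h := Finset.sum_le_sum fun m (_ : m ∈ Finset.range n) => majorant_succ_le m
    rw [Finset.sum_range_sub' (fun m : ℕ =>
      ((m + 1 : ℕ) : ℝ) * (halfRatio 0 (m + 1) * quarterRatio (m + 1))),
      ← Finset.sum_div] at h
    have hpos : 0 ≤ ((n + 1 : ℕ) : ℝ) * (halfRatio 0 (n + 1) * quarterRatio (n + 1)) :=
      mul_nonneg (Nat.cast_nonneg _)
        (mul_pos (halfRatio_pos 0 (n + 1)) (quarterRatio_pos (n + 1))).le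
    norm_num at h hpos ⊢
    linarith

lemma tendsto_mul_majorant :
    Tendsto (fun m : ℕ => (m : ℝ) * (halfRatio 0 m * quarterRatio m)) atTop (𝓝 0) := by
  set b : ℕ → ℝ := fun m => (m : ℝ) * (halfRatio 0 m * quarterRatio m) with hb
  have hpos : ∀ m, 0 < halfRatio 0 m * quarterRatio m := fun m =>
    mul_pos (halfRatio_pos 0 m) (quarterRatio_pos m)
  have hanti : Antitone fun m => b (m + 1) := antitone_nat_of_succ_le fun m => by
    linarith [majorant_succ_le m, hpos (m + 1)]
  have hbdd : BddBelow (Set.range fun m => b (m + 1)) :=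
    ⟨0, by rintro _ ⟨m, rfl⟩; exact mul_nonneg (Nat.cast_nonneg _) (hpos _).le⟩
  have hlim := tendsto_atTop_ciInf hanti hbdd
  set L := ⨅ m, b (m + 1)
  have hL0 : 0 ≤ L := le_ciInf fun m => mul_nonneg (Nat.cast_nonneg _) (hpos _).le
  rw [← tendsto_add_atTop_iff_nat 1]
  rcases hL0.eq_or_lt with h | h
  · rw [h]; exact hlim
  · exfalso
    apply Real.not_summable_one_div_natCast
    rw [← summable_nat_add_iff 1]
    refine Summable.of_nonneg_of_le (fun m => by positivity) (fun m => ?_)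
      (((summable_nat_add_iff 1).mpr summable_majorant).mul_left L⁻¹)
    have h1 : L ≤ b (m + 1) := ciInf_le hbdd m
    rw [div_le_iff₀ (by positivity), mul_comm, ← mul_assoc, mul_comm _ L⁻¹, mul_assoc,
      ← div_eq_inv_mul, one_le_div h]
    exact h1

lemma halfRatio_mul_risingCoeff_le (j N m : ℕ) :
    halfRatio N m * risingCoeff j m ≤ 4 ^ j * (halfRatio 0 m * quarterRatio m) := by
  calc halfRatio N m * risingCoeff j m
      ≤ halfRatio 0 m * (4 ^ j * quarterRatio m) :=
        mul_le_mul (halfRatio_le N m) (risingCoeff_le j m) (risingCoeff_nonneg j m)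
          (halfRatio_pos 0 m).le
    _ = _ := by ring

lemma halfRatio_mul_risingCoeff_nonneg (j N m : ℕ) : 0 ≤ halfRatio N m * risingCoeff j m :=
  mul_nonneg (halfRatio_pos N m).le (risingCoeff_nonneg j m)

lemma summable_gaussCoeff (j N : ℕ) :
    Summable fun m : ℕ => halfRatio N m * risingCoeff j m :=
  Summable.of_nonneg_of_le (halfRatio_mul_risingCoeff_nonneg j N)
    (halfRatio_mul_risingCoeff_le j N) (summable_majorant.mul_left _)

lemma tendsto_mul_gaussCoeff_term (j N : ℕ) :
    Tendsto (fun m : ℕ => (m : ℝ) * (halfRatio N m * risingCoeff j m)) atTop (𝓝 0) := by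
  refine squeeze_zero
    (fun m => mul_nonneg (Nat.cast_nonneg m) (halfRatio_mul_risingCoeff_nonneg j N m))
    (fun m => ?_) (by simpa using tendsto_mul_majorant.const_mul ((4 : ℝ) ^ j))
  calc (m : ℝ) * (halfRatio N m * risingCoeff j m)
      ≤ m * (4 ^ j * (halfRatio 0 m * quarterRatio m)) :=
        mul_le_mul_of_nonneg_left (halfRatio_mul_risingCoeff_le j N m) (Nat.cast_nonneg m)
    _ = _ := by ring

/-- The contiguity relation
`(1 - a/(N+1/2)) ₂F₁(1/2, a; N+1; 1) = (1 - a/(N+1)) ₂F₁(1/2, a; N+2; 1)`, coefficientwise. -/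
lemma gaussCoeff_contiguity (j N : ℕ) :
    gaussCoeff (j + 1) N - 1 / ((N : ℝ) + 1/2) * gaussCoeff j N
      = gaussCoeff (j + 1) (N + 1) - 1 / ((N : ℝ) + 1) * gaussCoeff j (N + 1) := by
  have hs := (((summable_gaussCoeff (j + 1) N).hasSum.sub
    ((summable_gaussCoeff j N).hasSum.mul_left (1 / ((N : ℝ) + 1/2)))).sub
    ((summable_gaussCoeff (j + 1) (N + 1)).hasSum.sub
    ((summable_gaussCoeff j (N + 1)).hasSum.mul_left (1 / ((N : ℝ) + 1))))).tendsto_sum_nat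
  have hterm : ∀ m : ℕ, halfRatio N m * risingCoeff (j + 1) m
      - 1 / ((N : ℝ) + 1/2) * (halfRatio N m * risingCoeff j m)
      - (halfRatio (N + 1) m * risingCoeff (j + 1) m
        - 1 / ((N : ℝ) + 1) * (halfRatio (N + 1) m * risingCoeff j m))
      = -(1 / ((N : ℝ) + 1/2))
          * (((m + 1 : ℕ) : ℝ) * (halfRatio N (m + 1) * risingCoeff (j + 1) (m + 1)))
        - -(1 / ((N : ℝ) + 1/2)) * ((m : ℝ) * (halfRatio N m * risingCoeff (j + 1) m)) := by
    intro m
    rw [halfRatio_param_succ, halfRatio_succ, risingCoeff_succ]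
    push_cast
    have h1 : (N : ℝ) + 1 + m ≠ 0 := by positivity
    have h2 : (N : ℝ) * 2 + 1 ≠ 0 := by positivity
    field_simp
    ring
  simp only [hterm] at hs
  simp only [Finset.sum_range_sub (fun m : ℕ =>
    -(1 / ((N : ℝ) + 1/2)) * ((m : ℝ) * (halfRatio N m * risingCoeff (j + 1) m)))] at hs
  have hz := ((tendsto_mul_gaussCoeff_term (j + 1) N).const_mul (-(1 / ((N : ℝ) + 1/2))))
  have := tendsto_nhds_unique hs (by simpa using hz)
  simp only [gaussCoeff]
  linarith

lemma gaussCoeff_zero (N : ℕ) : gaussCoeff 0 N = 1 := by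
  rw [gaussCoeff, tsum_eq_single 0]
  · simp [halfRatio, risingCoeff]
  · intro m hm
    obtain ⟨k, rfl⟩ := Nat.exists_eq_succ_of_ne_zero hm
    simp [risingCoeff]

lemma tendsto_gaussCoeff (j : ℕ) : Tendsto (gaussCoeff (j + 1)) atTop (𝓝 0) := by
  refine squeeze_zero (fun N => tsum_nonneg (halfRatio_mul_risingCoeff_nonneg (j + 1) N))
    (g := fun N : ℕ => gaussCoeff (j + 1) 0 * (1 / ((N : ℝ) + 1))) (fun N => ?_)
    (by simpa using tendsto_one_div_add_atTop_nhds_zero_nat.const_mul (gaussCoeff (j + 1) 0))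
  simp only [gaussCoeff]
  rw [← tsum_mul_right]
  refine Summable.tsum_le_tsum (fun m => ?_) (summable_gaussCoeff _ _)
    ((summable_gaussCoeff _ _).mul_right _)
  rcases eq_or_ne m 0 with rfl | hm
  · simp [risingCoeff]
  · have h := mul_le_mul_of_nonneg_right (halfRatio_le_div N m hm) (risingCoeff_nonneg (j + 1) m)
    refine h.trans (le_of_eq ?_)
    ring

lemma powerGap_succ (j N : ℕ) :
    powerGap j (N + 1)
      = powerGap j N + ((1 / ((N : ℝ) + 1/2))^j - (1 / ((N : ℝ) + 1))^j) := by
  simp only [powerGap, Finset.sum_range_succ, one_div_pow]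

/-- The first three coefficients of
`₂F₁(1/2, a; 1; 1) = ₂F₁(1/2, a; N+1; 1) ∏_{k<N} (1 - a/(k+1)) / (1 - a/(k+1/2))`. -/
lemma gaussCoeff_expansion (N : ℕ) :
    gaussCoeff 1 0 = gaussCoeff 1 N + powerGap 1 N ∧
    gaussCoeff 2 0 = gaussCoeff 2 N + gaussCoeff 1 N * powerGap 1 N
      + (powerGap 1 N ^ 2 + powerGap 2 N) / 2 ∧
    gaussCoeff 3 0 = gaussCoeff 3 N + gaussCoeff 2 N * powerGap 1 N
      + gaussCoeff 1 N * ((powerGap 1 N ^ 2 + powerGap 2 N) / 2)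
      + (powerGap 1 N ^ 3 / 6 + powerGap 1 N * powerGap 2 N / 2 + powerGap 3 N / 3) := by
  induction N with
  | zero => simp [powerGap]
  | succ N ih =>
    obtain ⟨h1, h2, h3⟩ := ih
    have c1 := gaussCoeff_contiguity 0 N
    have c2 := gaussCoeff_contiguity 1 N
    have c3 := gaussCoeff_contiguity 2 N
    rw [gaussCoeff_zero, gaussCoeff_zero] at c1
    norm_num only [zero_add, Nat.reduceAdd] at c1 c2 c3
    simp only [powerGap_succ]
    generalize (1 / ((N : ℝ) + 1/2)) = v at *
    generalize (1 / ((N : ℝ) + 1)) = u at *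
    have e1 : gaussCoeff 1 N = gaussCoeff 1 (N + 1) + (v - u) := by linear_combination c1
    have e2 : gaussCoeff 2 N = gaussCoeff 2 (N + 1) + (v - u) * gaussCoeff 1 (N + 1)
        + (v - u) * v := by linear_combination c2 + v * e1
    have e3 : gaussCoeff 3 N = gaussCoeff 3 (N + 1) + (v - u) * gaussCoeff 2 (N + 1)
        + (v - u) * v * gaussCoeff 1 (N + 1) + (v - u) * v ^ 2 := by
      linear_combination c3 + v * e2
    rw [e1] at h1
    rw [e1, e2] at h2
    rw [e1, e2, e3] at h3
    refine ⟨?_, ?_, ?_⟩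
    · rw [h1]; ring
    · rw [h2]; ring
    · rw [h3]; ring

lemma powerGap_eq (j N : ℕ) :
    powerGap j N = 2 ^ j * ∑ i ∈ Finset.range (2 * N), 1 / ((i : ℝ) + 1) ^ j
      - 2 * ∑ i ∈ Finset.range N, 1 / ((i : ℝ) + 1) ^ j := by
  induction N with
  | zero => simp [powerGap]
  | succ N ih =>
    rw [powerGap_succ, ih, show 2 * (N + 1) = 2 * N + 1 + 1 by ring, Finset.sum_range_succ,
      Finset.sum_range_succ, Finset.sum_range_succ]
    have h1 : (1 / ((N : ℝ) + 1/2)) ^ j = 2 ^ j * (1 / (((2 * N : ℕ) : ℝ) + 1) ^ j) := by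
      rw [← one_div_pow, ← mul_pow]
      congr 1
      push_cast
      field_simp
    have h2 : (1 / ((N : ℝ) + 1)) ^ j = 2 ^ j * (1 / (((2 * N + 1 : ℕ) : ℝ) + 1) ^ j) := by
      rw [← one_div_pow, ← mul_pow]
      congr 1
      push_cast
      field_simp
      ring
    have h3 : 1 / ((N : ℝ) + 1) ^ j = (1 / ((N : ℝ) + 1)) ^ j := (one_div_pow _ _).symm
    rw [h3]
    linear_combination h1 + h2

lemma tendsto_two_mul_atTop : Tendsto (fun N : ℕ => 2 * N) atTop atTop :=
  tendsto_id.const_mul_atTop' (by norm_num)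

lemma tendsto_powerGap_of_hasSum {j : ℕ} {s : ℝ}
    (h : HasSum (fun i : ℕ => 1 / ((i : ℝ) + 1) ^ j) s) :
    Tendsto (powerGap j) atTop (𝓝 (2 ^ j * s - 2 * s)) := by
  rw [funext (powerGap_eq j)]
  exact ((h.tendsto_sum_nat.comp tendsto_two_mul_atTop).const_mul _).sub
    (h.tendsto_sum_nat.const_mul _)

lemma tendsto_powerGap_one : Tendsto (powerGap 1) atTop (𝓝 (2 * Real.log 2)) := by
  have h := Real.tendsto_harmonic_sub_log
  have h2 := (((h.comp tendsto_two_mul_atTop).sub h).add_const (Real.log 2)).const_mul 2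
  rw [sub_self, zero_add] at h2
  refine h2.congr' ?_
  filter_upwards [eventually_gt_atTop 0] with N hN
  have hN' : (N : ℝ) ≠ 0 := by positivity
  rw [powerGap_eq]
  simp only [Function.comp, harmonic]
  push_cast
  rw [Real.log_mul two_ne_zero hN']
  simp only [one_div, pow_one]
  ring

lemma tendsto_powerGap_two : Tendsto (powerGap 2) atTop (𝓝 (Real.pi ^ 2 / 3)) := by
  have h := (hasSum_nat_add_iff' 1).mpr hasSum_zeta_two
  have h' : HasSum (fun i : ℕ => 1 / ((i : ℝ) + 1) ^ 2) (Real.pi ^ 2 / 6) := by simpa using h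
  convert tendsto_powerGap_of_hasSum h' using 2
  ring

lemma tendsto_powerGap_three : Tendsto (powerGap 3) atTop (𝓝 (6 * zeta3)) := by
  have h : Summable fun i : ℕ => 1 / ((i : ℝ) + 1) ^ 3 := by
    simpa using (summable_nat_add_iff 1).mpr
      (Real.summable_one_div_nat_pow.mpr (by norm_num : 1 < 3))
  convert tendsto_powerGap_of_hasSum h.hasSum using 2
  rw [zeta3]
  ring

lemma gaussCoeff_three_zero :
    gaussCoeff 3 0 = 2 * zeta3 + (4/3) * (Real.log 2)^3 + (Real.pi^2/3) * Real.log 2 := by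
  have p1 := tendsto_powerGap_one
  have p2 := tendsto_powerGap_two
  have p3 := tendsto_powerGap_three
  have hq := ((p1.pow 2).add p2).div_const 2
  have h := (((tendsto_gaussCoeff 2).add ((tendsto_gaussCoeff 1).mul p1)).add
    ((tendsto_gaussCoeff 0).mul hq)).add
    ((((p1.pow 3).div_const 6).add ((p1.mul p2).div_const 2)).add (p3.div_const 3))
  have := tendsto_nhds_unique (tendsto_const_nhds (x := gaussCoeff 3 0))
    (h.congr fun N => (gaussCoeff_expansion N).2.2.symm)
  rw [this]
  ring

lemma H_succ (m : ℕ) : H (m + 1) = H m + 1 / ((m : ℝ) + 1) :=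
  Finset.sum_range_succ _ _

lemma H2_succ (m : ℕ) : H2 (m + 1) = H2 m + 1 / ((m : ℝ) + 1) ^ 2 :=
  Finset.sum_range_succ _ _

lemma risingCoeff_one_succ (m : ℕ) : risingCoeff 1 (m + 1) = 1 / ((m : ℝ) + 1) := by
  induction m with
  | zero => simp [risingCoeff]
  | succ m ih =>
    rw [risingCoeff_succ, ih, risingCoeff]
    push_cast
    field_simp
    ring

lemma risingCoeff_two_succ (m : ℕ) : risingCoeff 2 (m + 1) = H m / ((m : ℝ) + 1) := by
  induction m with
  | zero => simp [risingCoeff, H]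
  | succ m ih =>
    rw [risingCoeff_succ, ih, risingCoeff_one_succ, H_succ]
    push_cast
    field_simp

lemma risingCoeff_three_succ (m : ℕ) :
    risingCoeff 3 (m + 1) = ((H m)^2 - H2 m) / (2 * ((m : ℝ) + 1)) := by
  induction m with
  | zero => simp [risingCoeff, H, H2]
  | succ m ih =>
    rw [risingCoeff_succ, ih, risingCoeff_two_succ, H_succ, H2_succ]
    push_cast
    field_simp
    ring

theorem stmt2 :
    ∑' n : ℕ, (((H n)^2 - H2 n) / (((n:ℝ)+1) * 4^(n+1))) * (Nat.choose (2*(n+1)) (n+1) : ℝ)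
      = 4 * zeta3 + (8/3) * (Real.log 2)^3 + (2 * Real.pi^2/3) * Real.log 2 := by
  have hterm : ∀ n : ℕ,
      (((H n)^2 - H2 n) / (((n:ℝ)+1) * 4^(n+1))) * (Nat.choose (2*(n+1)) (n+1) : ℝ)
        = 2 * (halfRatio 0 (n + 1) * risingCoeff 3 (n + 1)) := by
    intro n
    rw [halfRatio_zero_eq, risingCoeff_three_succ]
    field_simp
  have hsum := (summable_gaussCoeff 3 0).tsum_eq_zero_add
  have h := gaussCoeff_three_zero
  rw [gaussCoeff, hsum, show risingCoeff 3 0 = 0 by simp [risingCoeff], mul_zero, zero_add] at h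
  rw [tsum_congr hterm, tsum_mul_left, h]
  ring
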